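/- Let k ≥ 6 be an integer and let α, β ∈ {0,1,…,k}. There exists a k-L(2,1)-labelling L of the gadget G_k with L(u) = L(v) = k, L(a_u) = α and L(a_v) = β if and only if (α,β) ∈ {(2,0), (0,2), (k−2,0), (0,k−2)}. -/

import Mathlib

/-- For an integer `k`, a `k`-L(2,1)-labelling of a graph `G` is a map from the vertices
to `{0,1,…,k}` such that labels of adjacent vertices differ by at least `2` and vertices
at distance exactly `2` get distinct labels. -/
def IsL21Labelling {V : Type*} (G : SimpleGraph V) (k : ℕ) (L : V → ℕ) : Prop :=
  (∀ v, L v ≤ k) ∧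
  (∀ x y, G.Adj x y → 2 ≤ |(L x : ℤ) - (L y : ℤ)|) ∧
  (∀ x y, G.dist x y = 2 → L x ≠ L y)

/-- The vertices of the graph `H'` for a given `k`:
`c, d, e, f₁, …, f_{k-3}, g, h, i`. -/
inductive HpV (k : ℕ) | c | d | e | f (j : Fin (k - 3)) | g | h | i
deriving DecidableEq

/-- The adjacency generating relation of `H'`: edges `cd`, `de`, `gh`, `gi`,
and `d fⱼ`, `g fⱼ` for every `j`. -/
def HpAdj (k : ℕ) : HpV k → HpV k → Prop := fun x y =>
  (x = HpV.c ∧ y = HpV.d) ∨ (x = HpV.d ∧ y = HpV.e) ∨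
  (x = HpV.g ∧ y = HpV.h) ∨ (x = HpV.g ∧ y = HpV.i) ∨
  (∃ j, (x = HpV.d ∧ y = HpV.f j) ∨ (x = HpV.g ∧ y = HpV.f j))

/-- The vertices of the gadget `G_k` (for `k ≥ 6`): the path `u, a_u, a_v, v`,
the vertices `b₁, …, b_{k-5}`, and for each `i` two copies (indexed by `Bool`)
of the graph `H'`. -/
inductive GkV (k : ℕ)
| u | au | av | v
| b (i : Fin (k - 5))
| hp (i : Fin (k - 5)) (s : Bool) (x : HpV k)

/-- The adjacency generating relation of the gadget `G_k` (for `k ≥ 6`):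
the path `u a_u`, `a_u a_v`, `a_v v`; each `bᵢ` joined to `a_u` and `a_v`;
the vertex `c` of each of the two copies of `H'` at `bᵢ` joined to `bᵢ`;
and the edges of `H'` inside each copy. -/
def GkAdj (k : ℕ) : GkV k → GkV k → Prop := fun x y =>
  (x = GkV.u ∧ y = GkV.au) ∨ (x = GkV.au ∧ y = GkV.av) ∨ (x = GkV.av ∧ y = GkV.v) ∨
  (∃ i, (x = GkV.au ∧ y = GkV.b i) ∨ (x = GkV.av ∧ y = GkV.b i)) ∨
  (∃ i s, x = GkV.b i ∧ y = GkV.hp i s HpV.c) ∨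
  (∃ i s x' y', x = GkV.hp i s x' ∧ y = GkV.hp i s y' ∧ HpAdj k x' y')

/-- The gadget `G_k` (for `k ≥ 6`). -/
def Gk (k : ℕ) : SimpleGraph (GkV k) := SimpleGraph.fromRel (GkAdj k)

/-!
In a copy of `H'` the vertices `d` and `g` have degree `k - 1`, so each is labelled `0` or `k`.
Having common neighbours they get different labels, so the `f j` use up `2, …, k - 2`, and the
label of `c` lies in `{0, 1, k - 1, k}`, at the end away from the label of `d`. Thus every `b i`
is labelled in `1, …, k - 1` and needs two admissible labels for its two neighbours `c`. By the
symmetry of the gadget, let `α < β` be the labels of `a_u` and `a_v`. The `k - 5` labels of the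
`b i` are distinct and at least `2` away from `α` and `β`. If `2 ≤ α` then only `k - 6` labels
remain; if `α ≤ 1` then `k - 1` is excluded as well, because a neighbour `c` would have to avoid
`α`, `k - 1` and `k`, and there is enough room only when `α = 0` and `β` is an extreme value of
`2, …, k - 2`.
-/

open Finset

theorem isL21Labelling_iff {V : Type*} {G : SimpleGraph V} {k : ℕ} {L : V → ℕ} :
    IsL21Labelling G k L ↔ (∀ v, L v ≤ k) ∧
      (∀ x y, G.Adj x y → L x + 2 ≤ L y ∨ L y + 2 ≤ L x) ∧
      ∀ v, Set.InjOn L (G.neighborSet v) := by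
  have two_le_abs_sub_iff (a b : ℕ) : 2 ≤ |(a : ℤ) - b| ↔ a + 2 ≤ b ∨ b + 2 ≤ a := by
    rw [le_abs]; omega
  have dist_eq_two_iff (x y : V) :
      G.dist x y = 2 ↔ x ≠ y ∧ ¬G.Adj x y ∧ (G.commonNeighbors x y).Nonempty :=
    (ENat.toNat_eq_iff two_ne_zero).trans SimpleGraph.edist_eq_two_iff
  simp only [IsL21Labelling, two_le_abs_sub_iff, dist_eq_two_iff]
  refine and_congr_right fun _ => and_congr_right fun hsep => ⟨fun h v x hx y hy hxy => ?_, ?_⟩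
  · by_contra hne
    have hnadj : ¬G.Adj x y := fun hadj => by have := hsep x y hadj; omega
    exact h x y ⟨hne, hnadj, v, G.adj_symm hx, G.adj_symm hy⟩ hxy
  · rintro h x y ⟨hne, -, v, hx, hy⟩ hxy
    exact hne (h v (G.adj_symm hx) (G.adj_symm hy) hxy)

namespace IsL21Labelling

variable {V W : Type*} {G : SimpleGraph V} {H : SimpleGraph W} {k : ℕ} {L : V → ℕ}

theorem label_le (hL : IsL21Labelling G k L) (v : V) : L v ≤ k := hL.1 v

theorem add_two_le_or (hL : IsL21Labelling G k L) {x y : V} (h : G.Adj x y) :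
    L x + 2 ≤ L y ∨ L y + 2 ≤ L x :=
  (isL21Labelling_iff.1 hL).2.1 x y h

theorem injOn_neighborSet (hL : IsL21Labelling G k L) (v : V) : Set.InjOn L (G.neighborSet v) :=
  (isL21Labelling_iff.1 hL).2.2 v

theorem label_ne (hL : IsL21Labelling G k L) {v x y : V} (hx : G.Adj v x) (hy : G.Adj v y)
    (hne : x ≠ y) : L x ≠ L y :=
  (hL.injOn_neighborSet v).ne hx hy hne

theorem comp (hL : IsL21Labelling G k L) (φ : H →g G) (hφ : Function.Injective φ) :
    IsL21Labelling H k (L ∘ φ) :=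
  isL21Labelling_iff.2 ⟨fun _ => hL.label_le _, fun _ _ h => hL.add_two_le_or (φ.map_adj h),
    fun v => (hL.injOn_neighborSet (φ v)).comp hφ.injOn fun _ h => φ.map_adj h⟩

theorem reflect (hL : IsL21Labelling G k L) : IsL21Labelling G k fun v => k - L v := by
  refine isL21Labelling_iff.2 ⟨fun v => k.sub_le _, fun x y h => ?_, fun v x hx y hy hxy => ?_⟩
  · have := hL.add_two_le_or h
    have := hL.label_le x
    have := hL.label_le y
    omega
  · refine hL.injOn_neighborSet v hx hy ?_
    have := hL.label_le x
    have := hL.label_le y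
    dsimp only at hxy
    omega

theorem label_eq_zero_or_eq_of_le_card (hL : IsL21Labelling G k L) {v : V} {N : Finset V}
    (hN : ∀ w ∈ N, G.Adj v w) (hcard : k ≤ #N + 1) : L v = 0 ∨ L v = k := by
  by_contra! hv
  have hvk := hL.label_le v
  have hmaps : Set.MapsTo L N (range (k + 1) \ Icc (L v - 1) (L v + 1) : Finset ℕ) := by
    intro w hw
    have := hL.add_two_le_or (hN w hw)
    have := hL.label_le w
    simp only [coe_sdiff, Set.mem_sdiff, mem_coe, mem_range, mem_Icc]
    omega
  have hle := card_le_card_of_injOn L hmaps ((hL.injOn_neighborSet v).mono hN)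
  have hsub : Icc (L v - 1) (L v + 1) ⊆ range (k + 1) := fun _ => by
    simp only [mem_Icc, mem_range]; omega
  rw [card_sdiff_of_subset hsub, card_range, Nat.card_Icc] at hle
  omega

end IsL21Labelling

/-- The graph `H'` by itself; the gadget contains it as the copies `GkV.hp i s`. -/
def Hp (k : ℕ) : SimpleGraph (HpV k) := SimpleGraph.fromRel (HpAdj k)

namespace Hp

variable {k : ℕ}

@[simp]
theorem adj_c {x : HpV k} : (Hp k).Adj .c x ↔ x = .d := by
  cases x <;> simp [Hp, HpAdj]

@[simp]
theorem adj_d {x : HpV k} : (Hp k).Adj .d x ↔ x = .c ∨ x = .e ∨ ∃ j, x = .f j := by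
  cases x <;> simp [Hp, HpAdj]

@[simp]
theorem adj_e {x : HpV k} : (Hp k).Adj .e x ↔ x = .d := by
  cases x <;> simp [Hp, HpAdj]

@[simp]
theorem adj_f {j : Fin (k - 3)} {x : HpV k} : (Hp k).Adj (.f j) x ↔ x = .d ∨ x = .g := by
  cases x <;> simp [Hp, HpAdj]

@[simp]
theorem adj_g {x : HpV k} : (Hp k).Adj .g x ↔ x = .h ∨ x = .i ∨ ∃ j, x = .f j := by
  cases x <;> simp [Hp, HpAdj]

@[simp]
theorem adj_h {x : HpV k} : (Hp k).Adj .h x ↔ x = .g := by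
  cases x <;> simp [Hp, HpAdj]

@[simp]
theorem adj_i {x : HpV k} : (Hp k).Adj .i x ↔ x = .g := by
  cases x <;> simp [Hp, HpAdj]

section Necessity

variable {L : HpV k → ℕ} (hL : IsL21Labelling (Hp k) k L)
include hL

theorem label_eq_zero_or_eq_of_adj_f {v x y : HpV k} (hx : (Hp k).Adj v x) (hy : (Hp k).Adj v y)
    (hf : ∀ j, (Hp k).Adj v (.f j)) (hxy : x ≠ y) (hxf : ∀ j, x ≠ .f j) (hyf : ∀ j, y ≠ .f j) :
    L v = 0 ∨ L v = k := by
  let F : Finset (HpV k) := univ.image HpV.f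
  have hF : #F = k - 3 := by
    rw [card_image_of_injective _ fun _ _ => HpV.f.inj, card_fin]
  refine hL.label_eq_zero_or_eq_of_le_card (N := insert x (insert y F)) ?_ ?_
  · simpa [F, hx, hy] using hf
  · have hyF : y ∉ F := by simpa [F, eq_comm] using hyf
    have hxF : x ∉ insert y F := by simpa [F, hxy, eq_comm] using hxf
    rw [card_insert_of_notMem hxF, card_insert_of_notMem hyF]
    omega

theorem label_d : L .d = 0 ∨ L .d = k :=
  label_eq_zero_or_eq_of_adj_f hL (x := .c) (y := .e) (by simp) (by simp)
    (by simp) (by simp) (by simp) (by simp)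

theorem label_g : L .g = 0 ∨ L .g = k :=
  label_eq_zero_or_eq_of_adj_f hL (x := .h) (y := .i) (by simp) (by simp)
    (by simp) (by simp) (by simp) (by simp)

theorem image_label_f (hk : 4 ≤ k) : univ.image (fun j => L (.f j)) = Icc 2 (k - 2) := by
  have hinj : Function.Injective fun j => L (.f j) := fun j j' h =>
    HpV.f.inj (hL.injOn_neighborSet .d (by simp) (by simp) h)
  have hdg : L .d ≠ L .g :=
    hL.label_ne (v := .f ⟨0, by omega⟩) (by simp) (by simp) (by simp)
  refine eq_of_subset_of_card_le (image_subset_iff.2 fun j _ => ?_) ?_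
  · have := hL.add_two_le_or (x := .d) (y := .f j) (by simp)
    have := hL.add_two_le_or (x := .g) (y := .f j) (by simp)
    have := hL.label_le (.f j)
    have := label_d hL
    have := label_g hL
    rw [mem_Icc]
    omega
  · rw [card_image_of_injective _ hinj, card_fin, Nat.card_Icc]
    omega

theorem label_d_and_label_c_cases (hk : 4 ≤ k) :
    L .d = 0 ∧ k ≤ L .c + 1 ∨ L .d = k ∧ L .c ≤ 1 := by
  have hc : L .c ∉ Icc 2 (k - 2) := by
    rw [← image_label_f hL hk]
    simp only [mem_image, mem_univ, true_and, not_exists]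
    exact fun j => hL.label_ne (v := .d) (by simp) (by simp) (by simp)
  rw [mem_Icc] at hc
  have := hL.add_two_le_or (x := .c) (y := .d) (by simp)
  have := hL.label_le .c
  have := label_d hL
  omega

end Necessity

/-- The labelling of `H'` with the label `p` at `c` and the label `0` at `d`, meant for
`p ∈ {k - 1, k}`; the label of `e` is then the other element of `{k - 1, k}`. -/
def label (k p : ℕ) : HpV k → ℕ
  | .c => p
  | .d => 0
  | .e => 2 * k - 1 - p
  | .f j => j + 2
  | .g => k
  | .h => 0
  | .i => 1

theorem isL21Labelling_label (hk : 3 ≤ k) {p : ℕ} (hp : p = k - 1 ∨ p = k) :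
    IsL21Labelling (Hp k) k (label k p) := by
  refine isL21Labelling_iff.2 ⟨fun x => ?_, fun x y h => ?_, fun v x hx y hy hxy => ?_⟩
  · cases x <;> simp only [label] <;> omega
  · cases x <;> simp only [adj_c, adj_d, adj_e, adj_f, adj_g, adj_h, adj_i] at h <;>
      grind [label]
  · rw [SimpleGraph.mem_neighborSet] at hx hy
    cases v <;> simp only [adj_c, adj_d, adj_e, adj_f, adj_g, adj_h, adj_i] at hx hy <;>
      grind [label]

end Hp

namespace Gk

variable {k : ℕ}

@[simp]
theorem adj_u {x : GkV k} : (Gk k).Adj .u x ↔ x = .au := by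
  cases x <;> simp [Gk, GkAdj]

@[simp]
theorem adj_v {x : GkV k} : (Gk k).Adj .v x ↔ x = .av := by
  cases x <;> simp [Gk, GkAdj]

@[simp]
theorem adj_au {x : GkV k} : (Gk k).Adj .au x ↔ x = .u ∨ x = .av ∨ ∃ i, x = .b i := by
  cases x <;> simp [Gk, GkAdj]

@[simp]
theorem adj_av {x : GkV k} : (Gk k).Adj .av x ↔ x = .v ∨ x = .au ∨ ∃ i, x = .b i := by
  cases x <;> simp [Gk, GkAdj]

@[simp]
theorem adj_b {i : Fin (k - 5)} {x : GkV k} :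
    (Gk k).Adj (.b i) x ↔ x = .au ∨ x = .av ∨ ∃ s, x = .hp i s .c := by
  cases x <;> simp [Gk, GkAdj, and_comm, eq_comm]

@[simp]
theorem adj_hp {i : Fin (k - 5)} {s : Bool} {y : HpV k} {x : GkV k} :
    (Gk k).Adj (.hp i s y) x ↔ y = .c ∧ x = .b i ∨ ∃ z, x = .hp i s z ∧ (Hp k).Adj y z := by
  cases x <;> grind [Gk, GkAdj, Hp, SimpleGraph.fromRel_adj]

/-- The inclusion of one of the copies of `H'` into the gadget. -/
def hpHom (i : Fin (k - 5)) (s : Bool) : Hp k →g Gk k where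
  toFun := .hp i s
  map_rel' h := adj_hp.2 (.inr ⟨_, rfl, h⟩)

theorem hpHom_injective (i : Fin (k - 5)) (s : Bool) : Function.Injective (hpHom i s) :=
  fun _ _ h => (GkV.hp.inj h).2.2

/-- The reflection of the path `u, a_u, a_v, v`, extended by the identity to the gadget. -/
def swap (k : ℕ) : GkV k → GkV k
  | .u => .v
  | .au => .av
  | .av => .au
  | .v => .u
  | x => x

theorem swap_involutive : Function.Involutive (swap k) := by
  rintro (_ | _) <;> rfl

/-- `Gk.swap` as a graph homomorphism, along which labellings can be pulled back. -/
def swapHom (k : ℕ) : Gk k →g Gk k where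
  toFun := swap k
  map_rel' {x y} h := by
    cases x <;> simp only [adj_u, adj_v, adj_au, adj_av, adj_b, adj_hp] at h <;>
      grind [swap, adj_u, adj_v, adj_au, adj_av, adj_b, adj_hp]

/-- The pair `(α, β)` occurs as the labels of `a_u` and `a_v` in a labelling of the gadget in
which both `u` and `v` are labelled `k`. -/
def Realizable (k α β : ℕ) : Prop :=
  ∃ L : GkV k → ℕ, IsL21Labelling (Gk k) k L ∧ L .u = k ∧ L .v = k ∧ L .au = α ∧ L .av = β

theorem Realizable.symm {α β : ℕ} : Realizable k α β → Realizable k β α :=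
  fun ⟨L, hL, hu, hv, hau, hav⟩ =>
    ⟨L ∘ swapHom k, hL.comp (swapHom k) swap_involutive.injective, hv, hu, hav, hau⟩

section Necessity

variable {L : GkV k → ℕ} (hL : IsL21Labelling (Gk k) k L)
include hL

theorem label_d_and_label_c_cases (i : Fin (k - 5)) (s : Bool) :
    L (.hp i s .d) = 0 ∧ k ≤ L (.hp i s .c) + 1 ∨ L (.hp i s .d) = k ∧ L (.hp i s .c) ≤ 1 :=
  Hp.label_d_and_label_c_cases (hL.comp (hpHom i s) (hpHom_injective i s)) (by have := i.2; omega)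

theorem label_b_mem_Icc (i : Fin (k - 5)) : L (.b i) ∈ Icc 1 (k - 1) := by
  have hbd : L (.b i) ≠ L (.hp i true .d) :=
    hL.label_ne (v := .hp i true .c) (by simp) (by simp) (by simp)
  have := hL.add_two_le_or (x := .b i) (y := .hp i true .c) (by simp)
  have := label_d_and_label_c_cases hL i true
  have := hL.label_le (.b i)
  have := hL.label_le (.hp i true .c)
  rw [mem_Icc]
  omega

theorem add_two_le_or_label_b_au (i : Fin (k - 5)) :
    L (.b i) + 2 ≤ L .au ∨ L .au + 2 ≤ L (.b i) :=
  hL.add_two_le_or (by simp)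

theorem add_two_le_or_label_b_av (i : Fin (k - 5)) :
    L (.b i) + 2 ≤ L .av ∨ L .av + 2 ≤ L (.b i) :=
  hL.add_two_le_or (by simp)

theorem label_b_mem_Icc_of_label_au_le_one (hau : L .au ≤ 1) (i : Fin (k - 5)) :
    L (.b i) ∈ Icc (L .au + 2) (k - 2) := by
  have hcc : L (.hp i false .c) ≠ L (.hp i true .c) :=
    hL.label_ne (v := .b i) (by simp) (by simp) (by simp)
  have hc (s : Bool) : L (.hp i s .c) ≠ L .au :=
    hL.label_ne (v := .b i) (by simp) (by simp) (by simp)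
  have hbc (s : Bool) : L (.b i) + 2 ≤ L (.hp i s .c) ∨ L (.hp i s .c) + 2 ≤ L (.b i) :=
    hL.add_two_le_or (by simp)
  have hne : L (.b i) ≠ k - 1 := fun hb => by
    have hc_le (s : Bool) : L (.hp i s .c) ≤ 1 := by
      have := label_d_and_label_c_cases hL i s
      have := hL.label_le (.hp i s .c)
      have := hbc s
      omega
    have := hc_le false
    have := hc_le true
    have := hc false
    have := hc true
    omega
  have := mem_Icc.1 (label_b_mem_Icc hL i)
  have := add_two_le_or_label_b_au hL i
  rw [mem_Icc]
  omega

theorem card_add_le_card_of_label_b {T R : Finset ℕ} (hRT : R ⊆ T) (hT : ∀ i, L (.b i) ∈ T)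
    (hR : ∀ i, L (.b i) ∉ R) : k - 5 + #R ≤ #T := by
  have hinj : Function.Injective fun i => L (.b i) := fun i j h =>
    GkV.b.inj (hL.injOn_neighborSet .au (by simp) (by simp) h)
  have hle := card_le_card_of_injOn (s := univ) (t := T \ R) (fun i => L (.b i))
    (fun i _ => mem_coe.2 (mem_sdiff.2 ⟨hT i, hR i⟩)) hinj.injOn
  rw [card_fin] at hle
  have := card_sdiff_add_card_eq_card hRT
  omega

variable (hlt : L .au + 2 ≤ L .av) (hav : L .av + 2 ≤ k)
include hlt hav

theorem label_au_le_one : L .au ≤ 1 := by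
  by_contra! hau
  let R : Finset ℕ := Icc (L .au - 1) (L .au + 1) ∪ {L .av, L .av + 1}
  have hcard : #R = 5 := by
    rw [card_union_of_disjoint, Nat.card_Icc, card_pair (by omega)]
    · omega
    · simp only [disjoint_left, mem_Icc, mem_insert, mem_singleton]
      omega
  have hle : k - 5 + #R ≤ #(Icc 1 (k - 1)) := by
    refine card_add_le_card_of_label_b hL (fun x => ?_) (label_b_mem_Icc hL) fun i => ?_
    · simp only [R, mem_union, mem_Icc, mem_insert, mem_singleton]
      omega
    · have := add_two_le_or_label_b_au hL i
      have := add_two_le_or_label_b_av hL i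
      simp only [R, mem_union, mem_Icc, mem_insert, mem_singleton]
      omega
  rw [hcard, Nat.card_Icc] at hle
  omega

theorem label_au_eq_zero_and_label_av_eq_or_eq (hk : 6 ≤ k) :
    L .au = 0 ∧ (L .av = 2 ∨ L .av = k - 2) := by
  have hau := label_au_le_one hL hlt hav
  have hle : k - 5 + #(Icc (max (L .au + 2) (L .av - 1)) (min (k - 2) (L .av + 1))) ≤
      #(Icc (L .au + 2) (k - 2)) := by
    refine card_add_le_card_of_label_b hL (Icc_subset_Icc (le_max_left _ _) (min_le_left _ _))
      (label_b_mem_Icc_of_label_au_le_one hL hau) fun i => ?_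
    have := add_two_le_or_label_b_av hL i
    rw [mem_Icc]
    omega
  simp only [Nat.card_Icc] at hle
  omega

end Necessity

theorem Realizable.ne {α β : ℕ} (h : Realizable k α β) : α ≠ β := by
  obtain ⟨L, hL, -, -, rfl, rfl⟩ := h
  have := hL.add_two_le_or (x := .au) (y := .av) (by simp)
  omega

theorem Realizable.eq_zero_and_eq_or_eq_of_lt {α β : ℕ} (h : Realizable k α β) (hk : 6 ≤ k)
    (hlt : α < β) : α = 0 ∧ (β = 2 ∨ β = k - 2) := by
  obtain ⟨L, hL, -, hv, rfl, rfl⟩ := h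
  have hauav := hL.add_two_le_or (x := .au) (y := .av) (by simp)
  have havv := hL.add_two_le_or (x := .av) (y := .v) (by simp)
  have := hL.label_le .av
  exact label_au_eq_zero_and_label_av_eq_or_eq hL (by omega) (by omega) hk

/-- The labelling of the gadget with label `k` at `u` and `v`, label `0` at `a_u`, label `β` at
`a_v`, labels `t, t + 1, …` at the `b i`, and with `ℓ s` on every copy of `H'` indexed by `s`. -/
def label (k β t : ℕ) (ℓ : Bool → HpV k → ℕ) : GkV k → ℕ
  | .u => k
  | .au => 0
  | .av => β
  | .v => k
  | .b i => t + i
  | .hp _ s x => ℓ s x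

theorem isL21Labelling_label {β t : ℕ} {ℓ : Bool → HpV k → ℕ}
    (hℓ : ∀ s, IsL21Labelling (Hp k) k (ℓ s)) (hd : ∀ s, ℓ s .d = 0 ∨ ℓ s .d = k)
    (hc : ℓ false .c ≠ ℓ true .c) (hc0 : ∀ s, ℓ s .c ≠ 0) (hcβ : ∀ s, ℓ s .c ≠ β)
    (hβ : 2 ≤ β) (hβk : β + 2 ≤ k) (ht : 2 ≤ t) (htk : t ≤ 4)
    (hbβ : ∀ i < k - 5, t + i + 2 ≤ β ∨ β + 2 ≤ t + i)
    (hbc : ∀ i < k - 5, ∀ s, t + i + 2 ≤ ℓ s .c ∨ ℓ s .c + 2 ≤ t + i) :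
    IsL21Labelling (Gk k) k (label k β t ℓ) := by
  refine isL21Labelling_iff.2 ⟨fun x => ?_, fun x y h => ?_, fun z x hx y hy hxy => ?_⟩
  · cases x with
    | hp i s x => exact (hℓ s).label_le x
    | _ => simp only [label]; omega
  · cases x with
    | hp i s x =>
      rcases adj_hp.1 h with ⟨rfl, rfl⟩ | ⟨y, rfl, hxy⟩
      · exact (hbc i i.2 s).symm
      · exact (hℓ s).add_two_le_or hxy
    | _ =>
      simp only [adj_u, adj_v, adj_au, adj_av, adj_b] at h
      grind [label]
  · rw [SimpleGraph.mem_neighborSet] at hx hy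
    cases z with
    | hp i s z =>
      rw [adj_hp] at hx hy
      have hbd : t + i ≠ ℓ s .d := by have := hd s; omega
      rcases hx with ⟨rfl, rfl⟩ | ⟨x, rfl, hx⟩ <;> rcases hy with ⟨hz, rfl⟩ | ⟨y, rfl, hy⟩
      · rfl
      · rw [Hp.adj_c.1 hy] at hxy
        exact absurd hxy hbd
      · subst hz
        rw [Hp.adj_c.1 hx] at hxy
        exact absurd hxy.symm hbd
      · rw [(hℓ s).injOn_neighborSet z hx hy hxy]
    | b i =>
      rw [adj_b] at hx hy
      have hc_inj (s s' : Bool) (h : ℓ s .c = ℓ s' .c) : s = s' :=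
        (Bool.injective_iff (f := fun s => ℓ s .c)).2 hc h
      grind [label]
    | _ =>
      simp only [adj_u, adj_v, adj_au, adj_av] at hx hy
      grind [label]

theorem realizable_zero_two (hk : 6 ≤ k) : Realizable k 0 2 := by
  let ℓ (s : Bool) (x : HpV k) : ℕ := bif s then Hp.label k k x else k - Hp.label k (k - 1) x
  have hℓ (s : Bool) : IsL21Labelling (Hp k) k (ℓ s) := by
    cases s
    · exact (Hp.isL21Labelling_label (by omega) (.inl rfl)).reflect
    · exact Hp.isL21Labelling_label (by omega) (.inr rfl)
  refine ⟨label k 2 4 ℓ, isL21Labelling_label hℓ ?_ ?_ ?_ ?_ le_rfl (by omega) (by omega) le_rfl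
    (by omega) ?_, rfl, rfl, rfl, rfl⟩
  all_goals grind [Hp.label]

theorem realizable_zero_sub_two (hk : 6 ≤ k) : Realizable k 0 (k - 2) := by
  let ℓ (s : Bool) : HpV k → ℕ := Hp.label k (bif s then k else k - 1)
  have hℓ (s : Bool) : IsL21Labelling (Hp k) k (ℓ s) :=
    Hp.isL21Labelling_label (by omega) (by cases s <;> simp)
  refine ⟨label k (k - 2) 2 ℓ, isL21Labelling_label hℓ ?_ ?_ ?_ ?_ (by omega) (by omega) le_rfl
    (by omega) (by omega) ?_, rfl, rfl, rfl, rfl⟩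
  all_goals grind [Hp.label]

end Gk

/-- For `k ≥ 6` and `α, β ∈ {0,…,k}`: there is a `k`-L(2,1)-labelling `L` of `G_k` with
`L u = L v = k`, `L a_u = α`, `L a_v = β` iff `(α,β) ∈ {(2,0),(0,2),(k-2,0),(0,k-2)}`. -/
theorem stmt_11 (k : ℕ) (hk : 6 ≤ k) (α β : ℕ) (hα : α ≤ k) (hβ : β ≤ k) :
    (∃ L : GkV k → ℕ, IsL21Labelling (Gk k) k L ∧
      L GkV.u = k ∧ L GkV.v = k ∧ L GkV.au = α ∧ L GkV.av = β) ↔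
    (α, β) ∈ ({(2,0),(0,2),(k-2,0),(0,k-2)} : Set (ℕ × ℕ)) := by
  change Gk.Realizable k α β ↔ _
  simp only [Set.mem_insert_iff, Set.mem_singleton_iff, Prod.mk.injEq]
  constructor
  · intro h
    rcases lt_or_gt_of_ne h.ne with hlt | hlt
    · have := h.eq_zero_and_eq_or_eq_of_lt hk hlt
      omega
    · have := h.symm.eq_zero_and_eq_or_eq_of_lt hk hlt
      omega
  · rintro (⟨rfl, rfl⟩ | ⟨rfl, rfl⟩ | ⟨rfl, rfl⟩ | ⟨rfl, rfl⟩)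
    · exact (Gk.realizable_zero_two hk).symm
    · exact Gk.realizable_zero_two hk
    · exact (Gk.realizable_zero_sub_two hk).symm
    · exact Gk.realizable_zero_sub_two hk
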